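/- Let f : ℝⁿ → ℝ be a C² function with nowhere-vanishing gradient such that ‖∇f‖ is constant on each connected component of each level set of f. Then every level set of f is a union of parallel affine hyperplanes; in particular each connected component of each level set is an affine hyperplane. -/

import Mathlib

/-!
The unit normal field `N = ∇f / ‖∇f‖` turns out to be constant, so `f` is a strictly monotone
function of one linear coordinate and each nonempty level set is a single hyperplane.

Since `‖∇f‖` is constant along the level sets, `d(‖∇f‖⁻¹)` is proportional to `df`, so `N` is
curl-free (`inner_fderiv_unitNormal_comm`). A curl-free unit field satisfies `DN(N) = 0`, hence is
constant along the complete straight lines `x + ℝ N(x)` (`unit_field_const_on_line`). Its potential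
`u` (Poincaré lemma) is thus a `1`-Lipschitz function growing at unit speed in both directions of
each of these lines, and comparing `u` with the distance to a far away point on such a line shows
that `u` is affine (`unit_field_const`).
-/

open Set

open scoped InnerProductSpace

section MetricFunctions

variable {E : Type*} [NormedAddCommGroup E] [InnerProductSpace ℝ E]

/-- If `∇f` is everywhere a positive multiple of a fixed vector `v`, then `f` depends only on
`⟪v, ·⟫`, injectively. -/
lemma eq_iff_inner_eq {f : E → ℝ} {v : E} {r : E → ℝ} (hr : ∀ x, 0 < r x)
    (hf : ∀ x, HasFDerivAt f (innerSL ℝ (r x • v)) x) (x y : E) :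
    f y = f x ↔ ⟪v, y - x⟫_ℝ = 0 := by
  have hder (x w : E) (s : ℝ) :
      HasDerivAt (fun s : ℝ ↦ f (x + s • w)) (r (x + s • w) * ⟪v, w⟫_ℝ) s := by
    have hl : HasDerivAt (fun s : ℝ ↦ x + s • w) w s := by
      simpa using ((hasDerivAt_id s).smul_const w).const_add x
    have := (hf _).comp_hasDerivAt s hl
    rwa [innerSL_apply_apply, real_inner_smul_left] at this
  have hinj {w : E} (hw : 0 < ⟪v, w⟫_ℝ) (x : E) : f x < f (x + w) := by
    have := strictMono_of_deriv_pos (f := fun s : ℝ ↦ f (x + s • w))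
      (fun s ↦ by rw [(hder x w s).deriv]; exact mul_pos (hr _) hw) zero_lt_one
    simpa using this
  constructor
  · intro h
    rcases lt_trichotomy ⟪v, y - x⟫_ℝ 0 with hlt | h0 | hgt
    · have := hinj (w := x - y) (by rw [← neg_sub, inner_neg_right]; linarith) y
      rw [add_sub_cancel] at this
      exact absurd h this.ne
    · exact h0
    · have := hinj hgt x
      rw [add_sub_cancel] at this
      exact absurd h this.ne'
  · intro h
    have hd0 (s : ℝ) : HasDerivAt (fun s : ℝ ↦ f (x + s • (y - x))) 0 s := by
      simpa [h] using hder x (y - x) s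
    have := is_const_of_deriv_eq_zero (fun s ↦ (hd0 s).differentiableAt)
      (fun s ↦ (hd0 s).deriv) 1 0
    simpa using this

/-- A curl-free unit field is constant along the straight lines it spans. Differentiating
`‖N‖ = 1` gives `DN(y) (N y) = 0`, so `φ s = N (x + s t N x) - N x` solves the linear equation
`φ' = -t DN φ` with `φ 0 = 0`. -/
lemma unit_field_const_on_line {N : E → E} (hN : ContDiff ℝ 1 N) (hunit : ∀ x, ‖N x‖ = 1)
    (hsymm : ∀ x a b, ⟪fderiv ℝ N x a, b⟫_ℝ = ⟪fderiv ℝ N x b, a⟫_ℝ) (x : E) (t : ℝ) :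
    N (x + t • N x) = N x := by
  have hd (y : E) : HasFDerivAt N (fderiv ℝ N y) y :=
    (hN.differentiable one_ne_zero y).hasFDerivAt
  have hker (y : E) : fderiv ℝ N y (N y) = 0 := by
    refine ext_inner_right ℝ fun a ↦ ?_
    have h1 := (hd y).inner ℝ (hd y)
    have h2 : HasFDerivAt (fun z ↦ ⟪N z, N z⟫_ℝ) (0 : E →L[ℝ] ℝ) y := by
      simp only [real_inner_self_eq_norm_sq, hunit]
      exact hasFDerivAt_const _ _
    have h3 := congrArg (fun L : E →L[ℝ] ℝ ↦ L a) (h1.unique h2)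
    simp [real_inner_comm] at h3
    rw [hsymm, inner_zero_left, real_inner_comm]
    exact h3
  set v := N x with hv
  have hline (s : ℝ) : HasDerivAt (fun s : ℝ ↦ x + (s * t) • v) (t • v) s := by
    simpa using (((hasDerivAt_id s).mul_const t).smul_const v).const_add x
  have hφ (s : ℝ) : HasDerivAt (fun s : ℝ ↦ N (x + (s * t) • v) - v)
      (fderiv ℝ N (x + (s * t) • v) (t • v)) s :=
    ((hd _).comp_hasDerivAt s (hline s)).sub_const v
  have hcont : Continuous fun s : ℝ ↦ ‖fderiv ℝ N (x + (s * t) • v)‖ :=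
    ((hN.continuous_fderiv one_ne_zero).comp (by fun_prop)).norm
  obtain ⟨C, hC⟩ := (isCompact_Icc (a := (0 : ℝ)) (b := 1)).bddAbove_image hcont.continuousOn
  have h := eq_zero_of_abs_deriv_le_mul_abs_self_of_eq_zero_right (a := 0) (b := 1)
    (K := |t| * C) (f := fun s : ℝ ↦ N (x + (s * t) • v) - v)
    (fun s _ ↦ (hφ s).continuousAt.continuousWithinAt) (fun s _ ↦ (hφ s).hasDerivWithinAt)
    (by simp [hv]) (fun s hs ↦ ?_) 1 ⟨zero_le_one, le_rfl⟩
  · simpa [sub_eq_zero] using h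
  · have e : fderiv ℝ N (x + (s * t) • v) (t • v)
        = -(t • fderiv ℝ N (x + (s * t) • v) (N (x + (s * t) • v) - v)) := by
      rw [map_sub, hker, map_smul]; simp
    rw [e, norm_neg, norm_smul, Real.norm_eq_abs, mul_assoc]
    refine mul_le_mul_of_nonneg_left ?_ (abs_nonneg t)
    refine (ContinuousLinearMap.le_opNorm _ _).trans ?_
    exact mul_le_mul_of_nonneg_right (hC ⟨s, Ico_subset_Icc_self hs, rfl⟩) (norm_nonneg _)

/-- A curl-free unit field on the whole space is constant. Its potential `u` is `1`-Lipschitz and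
grows at unit speed along the lines spanned by the field, so
`(u x + t - u p)² ≤ ‖x + t N x - p‖²` for every `t`; comparing the terms linear in `t` forces
`u x - u p = ⟪x - p, N x⟫`, hence `u` is affine. -/
lemma unit_field_const {N : E → E} (hN : ContDiff ℝ 1 N) (hunit : ∀ x, ‖N x‖ = 1)
    (hsymm : ∀ x a b, ⟪fderiv ℝ N x a, b⟫_ℝ = ⟪fderiv ℝ N x b, a⟫_ℝ) (x y : E) :
    N x = N y := by
  have hd (y : E) : HasFDerivAt N (fderiv ℝ N y) y :=
    (hN.differentiable one_ne_zero y).hasFDerivAt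
  obtain ⟨u, hu⟩ : ∃ u : E → ℝ, ∀ z, HasFDerivAt u (innerSL ℝ (N z)) z := by
    have hω (z : E) : HasFDerivAt (fun z ↦ innerSL ℝ (N z)) ((innerSL ℝ).comp (fderiv ℝ N z)) z :=
      (innerSL ℝ (E := E)).hasFDerivAt.comp z (hd z)
    obtain ⟨u, hu⟩ := (convex_univ (E := E) (𝕜 := ℝ)).exists_forall_hasFDerivAt_of_fderiv_symmetric
      isOpen_univ (ω := fun z ↦ innerSL ℝ (N z))
      (fun z _ ↦ (hω z).differentiableAt.differentiableWithinAt)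
      (fun z _ a b ↦ by simpa [(hω z).fderiv] using hsymm z a b)
    exact ⟨u, fun z ↦ hu z (mem_univ z)⟩
  have hlip (p q : E) : ‖u p - u q‖ ≤ ‖p - q‖ := by
    simpa using convex_univ.norm_image_sub_le_of_norm_hasFDerivWithin_le (𝕜 := ℝ) (C := 1)
      (fun z _ ↦ (hu z).hasFDerivWithinAt)
      (fun z _ ↦ by rw [innerSL_apply_norm, hunit]) (mem_univ q) (mem_univ p)
  have hgrow (x : E) (t : ℝ) : u (x + t • N x) = u x + t := by
    have hder (s : ℝ) : HasDerivAt (fun s : ℝ ↦ u (x + s • N x) - s) 0 s := by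
      have hl : HasDerivAt (fun s : ℝ ↦ x + s • N x) (N x) s := by
        simpa using ((hasDerivAt_id s).smul_const (N x)).const_add x
      have : HasDerivAt (fun s : ℝ ↦ u (x + s • N x) - s) _ s :=
        ((hu _).comp_hasDerivAt s hl).sub (hasDerivAt_id s)
      simpa [unit_field_const_on_line hN hunit hsymm, hunit] using this
    have := is_const_of_deriv_eq_zero (fun s ↦ (hder s).differentiableAt)
      (fun s ↦ (hder s).deriv) t 0
    simp at this
    linarith
  have haff (x p : E) : u x - u p = ⟪x - p, N x⟫_ℝ := by
    have hquad (t : ℝ) : 2 * t * (u x - u p - ⟪x - p, N x⟫_ℝ) ≤ ‖x - p‖ ^ 2 - (u x - u p) ^ 2 := by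
      have h1 := hlip (x + t • N x) p
      rw [hgrow, Real.norm_eq_abs, show x + t • N x - p = (x - p) + t • N x by abel] at h1
      have h2 := pow_le_pow_left₀ (abs_nonneg _) h1 2
      rw [sq_abs, norm_add_sq_real, inner_smul_right, norm_smul, hunit, mul_one,
        Real.norm_eq_abs, sq_abs] at h2
      linarith
    by_contra hne
    have hδ : u x - u p - ⟪x - p, N x⟫_ℝ ≠ 0 := sub_ne_zero.mpr hne
    -- A left side linear in `t` with slope `2δ ≠ 0` exceeds any constant for suitable `t`.
    set δ := u x - u p - ⟪x - p, N x⟫_ℝ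
    have := hquad ((‖x - p‖ ^ 2 - (u x - u p) ^ 2 + 1) / (2 * δ))
    rw [show ∀ B : ℝ, 2 * (B / (2 * δ)) * δ = B from fun B ↦ by field_simp] at this
    linarith
  have hux : u = fun p ↦ u x - ⟪x - p, N x⟫_ℝ := funext fun p ↦ by rw [← haff]; ring
  have h1 : HasFDerivAt u (innerSL ℝ (N x)) y := by
    rw [hux]
    have : HasFDerivAt (fun p ↦ (u x - ⟪x, N x⟫_ℝ) + innerSL ℝ (N x) p) (innerSL ℝ (N x)) y :=
      (innerSL ℝ (N x)).hasFDerivAt.const_add _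
    convert this using 2 with p
    rw [inner_sub_left, innerSL_apply_apply, real_inner_comm p]
    ring
  exact innerSL_inj.mp (h1.unique (hu y))

variable [CompleteSpace E]

lemma contDiff_gradient {f : E → ℝ} (hf : ContDiff ℝ 2 f) : ContDiff ℝ 1 (gradient f) := by
  have h : ContDiff ℝ 1 (fderiv ℝ f) := hf.fderiv_right (by norm_num)
  exact (InnerProductSpace.toDual ℝ E).symm.toContinuousLinearEquiv.contDiff.comp h

lemma hasFDerivAt_gradient {f : E → ℝ} (hf : ContDiff ℝ 2 f) (x : E) :
    HasFDerivAt f (innerSL ℝ (gradient f x)) x :=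
  ((hf.differentiable two_ne_zero) x).hasGradientAt.hasFDerivAt

/-- The Hessian is symmetric. -/
lemma inner_fderiv_gradient_comm {f : E → ℝ} (hf : ContDiff ℝ 2 f) (x a b : E) :
    ⟪fderiv ℝ (gradient f) x a, b⟫_ℝ = ⟪fderiv ℝ (gradient f) x b, a⟫_ℝ := by
  have hg := ((contDiff_gradient hf).differentiable one_ne_zero x).hasFDerivAt
  have h2 : HasFDerivAt (fun y ↦ innerSL ℝ (gradient f y))
      ((innerSL ℝ).comp (fderiv ℝ (gradient f) x)) x :=
    (innerSL ℝ (E := E)).hasFDerivAt.comp x hg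
  simpa using second_derivative_symmetric (fun y ↦ hasFDerivAt_gradient hf y) h2 a b

/-- On a metric function, `‖∇f‖⁻¹` has vanishing derivative in directions tangent to the level
sets. The tangent vector `a` is realised by an integral curve of the orthogonal projection of `a`
to the level sets, which stays in one connected component. -/
lemma fderiv_inv_norm_gradient_eq_zero {f : E → ℝ} (hf : ContDiff ℝ 2 f)
    (hreg : ∀ x, gradient f x ≠ 0)
    (hmetric : ∀ x y, y ∈ connectedComponentIn (f ⁻¹' {f x}) x →
      ‖gradient f y‖ = ‖gradient f x‖) {x a : E} (ha : ⟪gradient f x, a⟫_ℝ = 0) :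
    fderiv ℝ (fun y ↦ ‖gradient f y‖⁻¹) x a = 0 := by
  have hg := contDiff_gradient hf
  set g := gradient f with hgdef
  let X : E → E := fun y ↦ a - (⟪g y, a⟫_ℝ / ‖g y‖ ^ 2) • g y
  have hX : ContDiff ℝ 1 X :=
    contDiff_const.sub (((hg.inner ℝ contDiff_const).div (hg.norm_sq ℝ)
      fun y ↦ by simpa using hreg y).smul hg)
  have hgX (y : E) : ⟪g y, X y⟫_ℝ = 0 := by
    have : ‖g y‖ ≠ 0 := by simpa using hreg y
    simp only [X, inner_sub_right, inner_smul_right, real_inner_self_eq_norm_sq]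
    field_simp
    ring
  have hXx : X x = a := by simp [X, ha]
  obtain ⟨γ, hγ0, ε, hε, hγ⟩ :=
    hX.contDiffAt.exists_forall_mem_closedBall_exists_eq_forall_mem_Ioo_hasDerivAt₀ (x₀ := x) 0
  simp only [zero_sub, zero_add] at hγ
  have h0 : (0 : ℝ) ∈ Ioo (-ε) ε := ⟨by linarith, hε⟩
  have hfγ : ∀ t ∈ Ioo (-ε) ε, HasDerivAt (f ∘ γ) 0 t := fun t ht ↦ by
    have := (hasFDerivAt_gradient hf (γ t)).comp_hasDerivAt t (hγ t ht)
    rwa [innerSL_apply_apply, hgX] at this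
  have hconst : ∀ t ∈ Ioo (-ε) ε, f (γ t) = f x := fun t ht ↦ by
    have := isOpen_Ioo.is_const_of_deriv_eq_zero isPreconnected_Ioo
      (fun s hs ↦ (hfγ s hs).differentiableAt.differentiableWithinAt)
      (fun s hs ↦ (hfγ s hs).deriv) ht h0
    simpa [hγ0] using this
  have hsub : γ '' Ioo (-ε) ε ⊆ connectedComponentIn (f ⁻¹' {f x}) x := by
    refine IsPreconnected.subset_connectedComponentIn ?_ ⟨0, h0, hγ0⟩ ?_
    · exact isPreconnected_Ioo.image _ fun s hs ↦ (hγ s hs).continuousAt.continuousWithinAt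
    · rintro _ ⟨t, ht, rfl⟩
      exact hconst t ht
  have hd : DifferentiableAt ℝ (fun y ↦ ‖g y‖⁻¹) (γ 0) :=
    ((hg.norm ℝ hreg).inv fun y ↦ by simpa using hreg y).differentiable one_ne_zero _
  have h1 := hd.hasFDerivAt.comp_hasDerivAt 0 (hγ 0 h0)
  have h2 : HasDerivAt ((fun y ↦ ‖g y‖⁻¹) ∘ γ) 0 0 := by
    refine (hasDerivAt_const 0 ‖g x‖⁻¹).congr_of_eventuallyEq ?_
    filter_upwards [Ioo_mem_nhds h0.1 h0.2] with t ht
    simp only [Function.comp_apply]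
    rw [hmetric x (γ t) (hsub ⟨t, ht, rfl⟩)]
  have := h1.unique h2
  rwa [hγ0, hXx] at this

/-- The unit normal field of the foliation of `E` by level sets of `f`. -/
noncomputable def unitNormal (f : E → ℝ) (x : E) : E := ‖gradient f x‖⁻¹ • gradient f x

lemma contDiff_unitNormal {f : E → ℝ} (hf : ContDiff ℝ 2 f) (hreg : ∀ x, gradient f x ≠ 0) :
    ContDiff ℝ 1 (unitNormal f) :=
  (((contDiff_gradient hf).norm ℝ hreg).inv fun y ↦ by simpa using hreg y).smul
    (contDiff_gradient hf)

lemma norm_unitNormal {f : E → ℝ} (hreg : ∀ x, gradient f x ≠ 0) (x : E) :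
    ‖unitNormal f x‖ = 1 := by
  have : ‖gradient f x‖ ≠ 0 := by simpa using hreg x
  simp [unitNormal, norm_smul, this]

/-- The unit normal field of a metric function is curl-free: the Hessian is symmetric, and the
derivative of `‖∇f‖⁻¹` is proportional to `⟪∇f, ·⟫`. -/
lemma inner_fderiv_unitNormal_comm {f : E → ℝ} (hf : ContDiff ℝ 2 f)
    (hreg : ∀ x, gradient f x ≠ 0)
    (hmetric : ∀ x y, y ∈ connectedComponentIn (f ⁻¹' {f x}) x →
      ‖gradient f y‖ = ‖gradient f x‖) (x a b : E) :
    ⟪fderiv ℝ (unitNormal f) x a, b⟫_ℝ = ⟪fderiv ℝ (unitNormal f) x b, a⟫_ℝ := by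
  have hg := contDiff_gradient hf
  have hr : DifferentiableAt ℝ (fun y ↦ ‖gradient f y‖⁻¹) x :=
    ((hg.norm ℝ hreg).inv fun y ↦ by simpa using hreg y).differentiable one_ne_zero _
  have key : fderiv ℝ (unitNormal f) x = _ :=
    (hr.hasFDerivAt.smul (hg.differentiable one_ne_zero x).hasFDerivAt).fderiv
  have h0 := fderiv_inv_norm_gradient_eq_zero hf hreg hmetric (x := x)
    (a := ⟪gradient f x, b⟫_ℝ • a - ⟪gradient f x, a⟫_ℝ • b) (by
      simp only [inner_sub_right, inner_smul_right]; ring)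
  have hs := inner_fderiv_gradient_comm hf x a b
  simp only [map_sub, map_smul, smul_eq_mul] at h0
  simp only [key, add_apply, smul_apply,
    ContinuousLinearMap.smulRight_apply, inner_add_left, real_inner_smul_left]
  rw [hs]
  linarith

end MetricFunctions

/-- **Level sets of a metric function without critical points are parallel hyperplanes.**
Let `f : ℝⁿ → ℝ` be a `C²` function with nowhere-vanishing gradient such that `‖∇f‖` is
constant on each connected component of each level set of `f` (a *metric function*).
Then every level set of `f` is a union of parallel affine hyperplanes: for each level
`c` there is a common direction `D` (a hyperplane through the origin, of dimension `n-1`)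
such that each connected component of `{f = c}` is an affine hyperplane with direction `D`. -/
theorem level_sets_of_metric_function_are_parallel_hyperplanes
    {n : ℕ} (f : EuclideanSpace ℝ (Fin n) → ℝ) (hf : ContDiff ℝ 2 f)
    (hreg : ∀ x, gradient f x ≠ 0)
    (hmetric : ∀ x y, y ∈ connectedComponentIn (f ⁻¹' {f x}) x →
      ‖gradient f y‖ = ‖gradient f x‖) :
    ∀ c : ℝ, ∃ D : Submodule ℝ (EuclideanSpace ℝ (Fin n)),
      Module.finrank ℝ D = n - 1 ∧
      ∀ x, f x = c → ∃ A : AffineSubspace ℝ (EuclideanSpace ℝ (Fin n)),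
        A.direction = D ∧
        connectedComponentIn (f ⁻¹' {c}) x = (A : Set (EuclideanSpace ℝ (Fin n))) := by
  -- In dimension `0` the gradient vanishes.
  have hn : n ≠ 0 := by
    rintro rfl
    exact hreg 0 (Subsingleton.elim _ _)
  obtain ⟨m, rfl⟩ := Nat.exists_eq_succ_of_ne_zero hn
  let v := unitNormal f 0
  have hv : v ≠ 0 := by
    rw [← norm_ne_zero_iff, norm_unitNormal hreg]
    exact one_ne_zero
  have hpos (x) : 0 < ‖gradient f x‖ := norm_pos_iff.mpr (hreg x)
  have hgrad (x) : HasFDerivAt f (innerSL ℝ (‖gradient f x‖ • v)) x := by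
    have hxv : unitNormal f x = v :=
      unit_field_const (contDiff_unitNormal hf hreg) (norm_unitNormal hreg)
        (inner_fderiv_unitNormal_comm hf hreg hmetric) x 0
    rw [← hxv, unitNormal, smul_inv_smul₀ (hpos x).ne']
    exact hasFDerivAt_gradient hf x
  intro c
  refine ⟨(Submodule.span ℝ {v})ᗮ, ?_, ?_⟩
  · have : Fact (Module.finrank ℝ (EuclideanSpace ℝ (Fin (m + 1))) = m + 1) := ⟨by simp⟩
    simpa using Submodule.finrank_orthogonal_span_singleton (𝕜 := ℝ) hv
  · rintro x rfl
    have hlevel : f ⁻¹' {f x}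
        = (AffineSubspace.mk' x (Submodule.span ℝ {v})ᗮ : Set (EuclideanSpace ℝ (Fin (m + 1)))) := by
      ext y
      rw [mem_preimage, mem_singleton_iff, eq_iff_inner_eq hpos hgrad, SetLike.mem_coe,
        AffineSubspace.mem_mk', Submodule.mem_orthogonal_singleton_iff_inner_right, vsub_eq_sub]
    refine ⟨AffineSubspace.mk' x _, AffineSubspace.direction_mk' _ _, ?_⟩
    -- The whole level set is a single hyperplane, so it is its own connected component.
    rw [hlevel]
    exact (AffineSubspace.convex _).isPreconnected.connectedComponentIn
      (AffineSubspace.self_mem_mk' x _)
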